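/- Let Ω ⊂ ℝ^d be open and bounded with Lipschitz boundary. Let ξ̄ ∈ C¹(Ω) satisfy ∇ξ̄(x) ≠ 0 for every x ∈ Ω with ξ̄(x) = 0, and suppose there is a constant C > 0 with λ^d({x ∈ Ω : |ξ̄(x)| ≤ ε}) ≤ Cε for all ε > 0, where λ^d is the d-dimensional Lebesgue measure. Let z ∈ C₀(Ω) and let (s_t)_{t>0} ⊂ [0,∞) satisfy s_t = o(t) as t ↘ 0. Then λ^d({x ∈ Ω : |ξ̄(x) + t z(x)| ≤ s_t}) = o(t) as t ↘ 0. -/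

import Mathlib

/-!
Fix `δ > 0`. Where `|z| < δ`, the condition `|ξ + t z| ≤ s_t` forces `|ξ| ≤ s_t + δ t`, and the
assumed level-set bound makes the measure of this part at most `C (s_t + δ t)`. The remaining part
lies in `K = {|z| ≥ δ}`, which is compact and contained in `Ω`, so by compactness it suffices to
bound the measure by `o(t)` near each point `x₀` of `K` (`IsCompact.induction_on`).

* If `ξ x₀ ≠ 0`, the set is empty near `x₀` for small `t` (`local_estimate_of_ne_zero`).
* If `ξ x₀ = 0`, choose `v` with `Dξ(x₀) v = 1`. Strict differentiability gives
  `|ξ (x + r v) - ξ x| ≥ |r| / 2` near `x₀`, so two points `a`, `a + r v` of the set satisfy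
  `|r| / 2 ≤ 2 s_t + t |z (a + r v) - z a|`. Boundedness of `z` first gives `r = O(t)`, and then
  uniform continuity of `z` gives `r = o(t)`: the set has width `o(t)` in the direction `v`.
  A bounded set of width less than `ρ` has about `1 / ρ` disjoint translates inside a fixed bounded
  set, so its volume is `O(ρ)` (`volume_le_of_width`). This replaces Fubini along lines parallel
  to `v`.
-/

open Filter Topology MeasureTheory

/-- A set whose width in the direction `v` is less than `ρ` has volume at most `ρ` times the volume
of any set `B` containing its translates by `r • v`, `0 ≤ r ≤ 1`: the translates by `k ρ v` with
`k < ⌈1 / ρ⌉` are pairwise disjoint and contained in `B`. -/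
lemma volume_le_of_width {d : ℕ} {A B : Set (EuclideanSpace ℝ (Fin d))}
    (hA : MeasurableSet A) (v : EuclideanSpace ℝ (Fin d)) {ρ : ℝ} (hρ : 0 < ρ)
    (hwidth : ∀ a ∈ A, ∀ r : ℝ, a + r • v ∈ A → |r| < ρ)
    (hB : ∀ a ∈ A, ∀ r : ℝ, 0 ≤ r → r ≤ 1 → a + r • v ∈ B) :
    volume A ≤ ENNReal.ofReal ρ * volume B := by
  set N : ℕ := ⌈1 / ρ⌉₊ with hN
  let T : ℕ → Set (EuclideanSpace ℝ (Fin d)) :=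
    fun k => (fun x => x + (-((k : ℝ) * ρ)) • v) ⁻¹' A
  have hvol : ∀ k, volume (T k) = volume A := fun k => measure_preimage_add_right _ _ _
  have hmeas : ∀ k, MeasurableSet (T k) := fun k => (measurable_add_const _) hA
  have hdisj : Set.PairwiseDisjoint (↑(Finset.range N)) T := by
    intro k _ j _ hkj
    refine Set.disjoint_left.2 fun x hx hx' => ?_
    simp only [T, Set.mem_preimage] at hx hx'
    have h := hwidth _ hx (((k : ℝ) - j) * ρ) (by
      convert hx' using 1
      module)
    rw [abs_mul, abs_of_pos hρ] at h
    have h1 : (1 : ℝ) ≤ |(k : ℝ) - j| := by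
      have : (1 : ℤ) ≤ |(k : ℤ) - j| := Int.one_le_abs (by omega)
      exact_mod_cast this
    nlinarith
  have hsub : (⋃ k ∈ Finset.range N, T k) ⊆ B := by
    intro x hx
    simp only [Set.mem_iUnion, Finset.mem_range, exists_prop] at hx
    obtain ⟨k, hk, hx⟩ := hx
    have hk' : (k : ℝ) < 1 / ρ := Nat.lt_ceil.1 hk
    rw [lt_div_iff₀ hρ] at hk'
    have h := hB _ hx ((k : ℝ) * ρ) (by positivity) hk'.le
    convert h using 1
    module
  have hsum : (N : ENNReal) * volume A ≤ volume B := by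
    calc (N : ENNReal) * volume A = ∑ k ∈ Finset.range N, volume (T k) := by simp [hvol]
      _ = volume (⋃ k ∈ Finset.range N, T k) :=
          (measure_biUnion_finset hdisj fun k _ => hmeas k).symm
      _ ≤ volume B := measure_mono hsub
  have hone : 1 ≤ ENNReal.ofReal ρ * (N : ENNReal) := by
    rw [← ENNReal.ofReal_natCast, ← ENNReal.ofReal_mul hρ.le, ENNReal.one_le_ofReal]
    have := Nat.le_ceil (1 / ρ)
    rw [div_le_iff₀ hρ] at this
    linarith
  calc volume A = 1 * volume A := (one_mul _).symm
    _ ≤ ENNReal.ofReal ρ * (N : ENNReal) * volume A := by gcongr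
    _ = ENNReal.ofReal ρ * ((N : ENNReal) * volume A) := mul_assoc _ _ _
    _ ≤ ENNReal.ofReal ρ * volume B := by gcongr

/-- Away from the zeros of `ξ`, the perturbed level sets are locally empty for small `t`. -/
lemma local_estimate_of_ne_zero {d : ℕ} {xi z : EuclideanSpace ℝ (Fin d) → ℝ}
    {s : ℝ → ℝ} {M : ℝ} (hM : ∀ x, |z x| ≤ M)
    (hs : ∀ c : ℝ, 0 < c → ∀ᶠ t in 𝓝[>] (0 : ℝ), s t ≤ c * t)
    {x₀ : EuclideanSpace ℝ (Fin d)} (hxi : ContinuousAt xi x₀) (hne : xi x₀ ≠ 0) :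
    ∃ U ∈ 𝓝 x₀, ∀ᶠ t in 𝓝[>] (0 : ℝ), ∀ x ∈ U, ¬ |xi x + t * z x| ≤ s t := by
  have hpos : 0 < |xi x₀| := abs_pos.2 hne
  have hU : ∀ᶠ x in 𝓝 x₀, |xi x₀| / 2 < |xi x| :=
    hxi.abs.eventually_const_lt (by linarith)
  have hM0 : 0 ≤ M := (abs_nonneg _).trans (hM x₀)
  refine ⟨_, hU, ?_⟩
  have hsmall : ∀ᶠ t in 𝓝[>] (0 : ℝ), t < |xi x₀| / 2 / (M + 1) :=
    mem_nhdsWithin_of_mem_nhds (Iio_mem_nhds (by positivity))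
  filter_upwards [hs 1 one_pos, hsmall, self_mem_nhdsWithin] with t h1 h2 ht x hx hle
  have ht : 0 < t := ht
  have hx : |xi x₀| / 2 < |xi x| := hx
  rw [lt_div_iff₀ (by positivity)] at h2
  have h3 : |xi x| ≤ |xi x + t * z x| + |t * z x| := by
    have := abs_sub (xi x + t * z x) (t * z x)
    simpa using this
  rw [abs_mul, abs_of_pos ht] at h3
  have := mul_le_mul_of_nonneg_left (hM x) ht.le
  linarith

/-- Near a regular point of `ξ`, the perturbed level sets have volume `o(t)`. -/
lemma local_estimate_of_regular {d : ℕ} {Ω : Set (EuclideanSpace ℝ (Fin d))} (hΩ : IsOpen Ω)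
    {xi z : EuclideanSpace ℝ (Fin d) → ℝ} (hxi : ContDiffOn ℝ 1 xi Ω)
    (hzc : Continuous z) (hzu : UniformContinuous z)
    {s : ℝ → ℝ} {M : ℝ} (hM : ∀ x, |z x| ≤ M)
    (hs : ∀ c : ℝ, 0 < c → ∀ᶠ t in 𝓝[>] (0 : ℝ), s t ≤ c * t)
    {x₀ : EuclideanSpace ℝ (Fin d)} (hx₀ : x₀ ∈ Ω) (hreg : fderiv ℝ xi x₀ ≠ 0) :
    ∃ U ∈ 𝓝 x₀, ∀ ε : ℝ, 0 < ε → ∀ᶠ t in 𝓝[>] (0 : ℝ),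
      volume (U ∩ {x | |xi x + t * z x| ≤ s t}) ≤ ENNReal.ofReal (ε * t) := by
  have hM0 : 0 ≤ M := (abs_nonneg _).trans (hM x₀)
  have hstrict : HasStrictFDerivAt xi (fderiv ℝ xi x₀) x₀ :=
    (hxi.contDiffAt (hΩ.mem_nhds hx₀)).hasStrictFDerivAt one_ne_zero
  obtain ⟨v, hv⟩ : ∃ v, fderiv ℝ xi x₀ v = 1 := by
    obtain ⟨w, hw⟩ : ∃ w, fderiv ℝ xi x₀ w ≠ 0 := by
      by_contra! h
      exact hreg (ContinuousLinearMap.ext h)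
    exact ⟨(fderiv ℝ xi x₀ w)⁻¹ • w, by simp [hw]⟩
  have hv0 : v ≠ 0 := by
    rintro rfl
    simp at hv
  have hvn : 0 < ‖v‖ := norm_pos_iff.2 hv0
  -- The constant `1 / (2 ‖v‖)` makes the linearization error at most half of the increment `|r|`.
  have hlin := hstrict.isLittleO.def (show (0 : ℝ) < 1 / (2 * ‖v‖) by positivity)
  rw [nhds_prod_eq, eventually_prod_self_iff'] at hlin
  obtain ⟨W, hW, hWlin⟩ := hlin
  obtain ⟨R, hR, hRsub⟩ := Metric.nhds_basis_closedBall.mem_iff.1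
    (inter_mem hW (hΩ.mem_nhds hx₀))
  set U := Metric.closedBall x₀ R with hU
  have hgrow : ∀ a ∈ U, ∀ r : ℝ, a + r • v ∈ U → |r| / 2 ≤ |xi (a + r • v) - xi a| := by
    intro a ha r har
    have h := hWlin _ (hRsub har).1 _ (hRsub ha).1
    simp only [add_sub_cancel_left, map_smul, hv, norm_smul, Real.norm_eq_abs, smul_eq_mul,
      mul_one] at h
    have h2 : 1 / (2 * ‖v‖) * (|r| * ‖v‖) = |r| / 2 := by field_simp
    rw [h2] at h
    have h3 := abs_sub_abs_le_abs_sub r (xi (a + r • v) - xi a)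
    rw [abs_sub_comm r] at h3
    linarith
  refine ⟨U, Metric.closedBall_mem_nhds _ hR, fun ε hε => ?_⟩
  set V := Metric.closedBall x₀ (R + ‖v‖) with hV
  have hVfin : volume V ≠ ⊤ := measure_closedBall_lt_top.ne
  set m := (volume V).toReal with hm
  have hm0 : 0 ≤ m := ENNReal.toReal_nonneg
  -- `c * t` is the width to be achieved, so that the volume is at most `c * t * m ≤ ε * t`.
  set c := ε / (m + 1) with hc
  have hcpos : 0 < c := by positivity
  obtain ⟨δ, hδ, hzδ⟩ := Metric.uniformContinuous_iff.1 hzu (c / 8) (by positivity)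
  have hsmall : ∀ᶠ t in 𝓝[>] (0 : ℝ), t < δ / ((c + 4 * M) * ‖v‖) :=
    mem_nhdsWithin_of_mem_nhds (Iio_mem_nhds (by positivity))
  filter_upwards [hs (c / 16) (by positivity), hsmall, self_mem_nhdsWithin] with t hst htδ ht
  have ht : 0 < t := ht
  rw [lt_div_iff₀ (by positivity)] at htδ
  have hclosed : IsClosed (U ∩ {x | |xi x + t * z x| ≤ s t}) := by
    have hcont : ContinuousOn (fun x => |xi x + t * z x|) U :=
      ((hxi.continuousOn.mono fun x hx => (hRsub hx).2).add
        (hzc.const_mul t |>.continuousOn)).abs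
    exact hcont.preimage_isClosed_of_isClosed Metric.isClosed_closedBall isClosed_Iic
  have hkey := volume_le_of_width (B := V) hclosed.measurableSet v (ρ := c * t) (by positivity)
    (by
      rintro a ⟨ha, haS⟩ r ⟨hb, hbS⟩
      simp only [Set.mem_ofPred_eq] at haS hbS
      have hg := hgrow a ha r hb
      -- The increment of `ξ` is controlled by `s t` and the increment of `z`.
      have hinc : |r| / 2 ≤ 2 * s t + t * |z (a + r • v) - z a| := by
        have e : xi (a + r • v) - xi a = (xi (a + r • v) + t * z (a + r • v))
            - (xi a + t * z a) - t * (z (a + r • v) - z a) := by ring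
        have h1 := abs_sub ((xi (a + r • v) + t * z (a + r • v)) - (xi a + t * z a))
          (t * (z (a + r • v) - z a))
        have h2 := abs_sub (xi (a + r • v) + t * z (a + r • v)) (xi a + t * z a)
        rw [abs_mul, abs_of_pos ht] at h1
        rw [e] at hg
        linarith
      have hz1 : |z (a + r • v) - z a| ≤ 2 * M := by
        have := abs_sub (z (a + r • v)) (z a)
        linarith [hM (a + r • v), hM a]
      have hcrude : |r| ≤ (c + 4 * M) * t := by
        have := mul_le_mul_of_nonneg_left hz1 ht.le
        nlinarith
      have hz2 : |z (a + r • v) - z a| < c / 8 := by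
        refine hzδ ?_
        rw [dist_eq_norm, add_sub_cancel_left, norm_smul, Real.norm_eq_abs]
        have := mul_le_mul_of_nonneg_right hcrude hvn.le
        nlinarith
      have := mul_le_mul_of_nonneg_left hz2.le ht.le
      nlinarith [mul_pos hcpos ht])
    (by
      rintro a ⟨ha, -⟩ r hr0 hr1
      rw [hV, Metric.mem_closedBall, dist_eq_norm]
      rw [hU, Metric.mem_closedBall, dist_eq_norm] at ha
      calc ‖a + r • v - x₀‖ = ‖(a - x₀) + r • v‖ := by congr 1; abel
        _ ≤ ‖a - x₀‖ + ‖r • v‖ := norm_add_le _ _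
        _ ≤ R + ‖v‖ := by
            rw [norm_smul, Real.norm_of_nonneg hr0]
            nlinarith)
  refine hkey.trans ?_
  rw [← ENNReal.ofReal_toReal hVfin, ← ENNReal.ofReal_mul (by positivity)]
  refine ENNReal.ofReal_le_ofReal ?_
  have hcm : c * m ≤ ε := by
    rw [hc, div_mul_eq_mul_div, div_le_iff₀ (by positivity)]
    nlinarith
  calc c * t * m = c * m * t := by ring
    _ ≤ ε * t := by gcongr

theorem stmt19 {d : ℕ} (Ω : Set (EuclideanSpace ℝ (Fin d)))
    (hΩopen : IsOpen Ω) (hΩbd : Bornology.IsBounded Ω)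
    (xi : EuclideanSpace ℝ (Fin d) → ℝ)
    (hxiC1 : ContDiffOn ℝ 1 xi Ω)
    (hxigrad : ∀ x ∈ Ω, xi x = 0 → fderiv ℝ xi x ≠ 0)
    (C : ℝ) (hC : 0 < C)
    (hlevel : ∀ ε : ℝ, 0 < ε →
      volume {x ∈ Ω | |xi x| ≤ ε} ≤ ENNReal.ofReal (C * ε))
    (z : EuclideanSpace ℝ (Fin d) → ℝ) (hzcont : Continuous z)
    (hz0 : ∀ x ∉ Ω, z x = 0)
    (s : ℝ → ℝ) (hs : ∀ t : ℝ, 0 < t → 0 ≤ s t)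
    (hso : Tendsto (fun t => s t / t) (𝓝[>] (0 : ℝ)) (𝓝 0)) :
    Tendsto (fun t => (volume {x ∈ Ω | |xi x + t * z x| ≤ s t}).toReal / t)
      (𝓝[>] (0 : ℝ)) (𝓝 0) := by
  have hzsupp : HasCompactSupport z :=
    HasCompactSupport.intro hΩbd.isCompact_closure fun x hx => hz0 x fun h => hx (subset_closure h)
  have hzu : UniformContinuous z := hzsupp.uniformContinuous_of_continuous hzcont
  obtain ⟨M, hM⟩ := hzsupp.exists_bound_of_continuous hzcont
  simp only [Real.norm_eq_abs] at hM
  have hs' : ∀ c : ℝ, 0 < c → ∀ᶠ t in 𝓝[>] (0 : ℝ), s t ≤ c * t := by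
    intro c hc
    filter_upwards [hso.eventually_lt_const hc, self_mem_nhdsWithin] with t h ht
    exact ((div_lt_iff₀ ht).1 h).le
  have hcompact : ∀ δ : ℝ, 0 < δ → ∀ ε : ℝ, 0 < ε → ∀ᶠ t in 𝓝[>] (0 : ℝ),
      volume ({x | δ ≤ |z x|} ∩ {x | |xi x + t * z x| ≤ s t}) ≤ ENNReal.ofReal (ε * t) := by
    intro δ hδ
    have hsub : {x | δ ≤ |z x|} ⊆ Ω := by
      intro x hx
      by_contra h
      simp only [Set.mem_ofPred_eq, hz0 x h, abs_zero] at hx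
      linarith
    have hK : IsCompact {x | δ ≤ |z x|} :=
      Metric.isCompact_of_isClosed_isBounded (isClosed_le continuous_const hzcont.abs)
        (hΩbd.subset hsub)
    refine hK.induction_on (p := fun W => ∀ ε : ℝ, 0 < ε → ∀ᶠ t in 𝓝[>] (0 : ℝ),
      volume (W ∩ {x | |xi x + t * z x| ≤ s t}) ≤ ENNReal.ofReal (ε * t)) ?_ ?_ ?_ ?_
    · intro ε _
      simp
    · intro W W' hWW' h ε hε
      filter_upwards [h ε hε] with t ht
      exact (measure_mono (Set.inter_subset_inter_left _ hWW')).trans ht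
    · intro W W' h h' ε hε
      filter_upwards [h (ε / 2) (by positivity), h' (ε / 2) (by positivity),
        self_mem_nhdsWithin] with t ht ht' htpos
      have htpos : 0 < t := htpos
      rw [Set.union_inter_distrib_right]
      refine (measure_union_le _ _).trans ((add_le_add ht ht').trans ?_)
      rw [← ENNReal.ofReal_add (by positivity) (by positivity)]
      exact ENNReal.ofReal_le_ofReal (by linarith)
    · intro x hx
      by_cases h0 : xi x = 0
      · obtain ⟨U, hU, h⟩ := local_estimate_of_regular hΩopen hxiC1 hzcont hzu hM hs' (hsub hx)
          (hxigrad x (hsub hx) h0)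
        exact ⟨U, mem_nhdsWithin_of_mem_nhds hU, h⟩
      · obtain ⟨U, hU, h⟩ := local_estimate_of_ne_zero hM hs'
          (hxiC1.continuousOn.continuousAt (hΩopen.mem_nhds (hsub hx))) h0
        refine ⟨U, mem_nhdsWithin_of_mem_nhds hU, fun ε _ => ?_⟩
        filter_upwards [h] with t ht
        have : U ∩ {x | |xi x + t * z x| ≤ s t} = ∅ :=
          Set.eq_empty_of_forall_notMem fun y hy => ht y hy.1 hy.2
        simp [this]
  have hmain : ∀ ε : ℝ, 0 < ε → ∀ᶠ t in 𝓝[>] (0 : ℝ),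
      volume {x ∈ Ω | |xi x + t * z x| ≤ s t} ≤ ENNReal.ofReal (ε * t) := by
    intro ε hε
    -- With `s t ≤ δ t`, the region `|z| < δ` contributes at most `2 C δ t = (ε / 2) t`.
    set δ := ε / (4 * C) with hδdef
    have hδ : 0 < δ := by positivity
    filter_upwards [hs' δ hδ, hcompact δ hδ (ε / 2) (by positivity), self_mem_nhdsWithin]
      with t hst hK ht
    have ht : 0 < t := ht
    have hcover : {x ∈ Ω | |xi x + t * z x| ≤ s t} ⊆ {x ∈ Ω | |xi x| ≤ 2 * δ * t} ∪
        ({x | δ ≤ |z x|} ∩ {x | |xi x + t * z x| ≤ s t}) := by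
      rintro x ⟨hxΩ, hx⟩
      rcases le_or_gt δ |z x| with h | h
      · exact Or.inr ⟨h, hx⟩
      · refine Or.inl ⟨hxΩ, ?_⟩
        have h3 := abs_sub (xi x + t * z x) (t * z x)
        rw [add_sub_cancel_right, abs_mul, abs_of_pos ht] at h3
        have := mul_le_mul_of_nonneg_left h.le ht.le
        linarith
    refine (measure_mono hcover).trans ((measure_union_le _ _).trans
      ((add_le_add (hlevel _ (by positivity)) hK).trans ?_))
    rw [← ENNReal.ofReal_add (by positivity) (by positivity)]
    refine ENNReal.ofReal_le_ofReal (le_of_eq ?_)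
    rw [hδdef]
    field_simp
    ring
  rw [Metric.tendsto_nhds]
  intro ε hε
  filter_upwards [hmain (ε / 2) (by positivity), self_mem_nhdsWithin] with t h ht
  have ht : 0 < t := ht
  rw [Real.dist_eq, sub_zero, abs_of_nonneg (by positivity), div_lt_iff₀ ht]
  have := ENNReal.toReal_le_of_le_ofReal (by positivity) h
  nlinarith [mul_pos hε ht]
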